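/- For every real number α > 0, there exists a unique infinitely differentiable function τ : ℝ → ℝ such that τ(t) > 0 for all t ∈ ℝ, τ(0) = 1, τ'(0) = 0, and τ''(t) = α / (2 τ(t)^(1+α)) for all t ∈ ℝ. -/

import Mathlib

open Set Filter Topology

/-- A scalar autonomous equation `u' = 1 / f(u)` whose right-hand side has `f` continuous and
bounded below by a positive constant has a global solution through the origin, namely the
inverse of a primitive of `f`. -/
theorem exists_forall_hasDerivAt_inv_comp {f : ℝ → ℝ} {c : ℝ} (hf : Continuous f) (hc : 0 < c)
    (hcf : ∀ x, c ≤ f x) :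
    ∃ u : ℝ → ℝ, u 0 = 0 ∧ ∀ t, HasDerivAt u (f (u t))⁻¹ t := by
  set T : ℝ → ℝ := fun x ↦ ∫ s in (0 : ℝ)..x, f s with hT
  have hT' (x : ℝ) : HasDerivAt T (f x) x := hf.integral_hasStrictDerivAt 0 x |>.hasDerivAt
  have hT0 : T 0 = 0 := by simp [hT]
  have hdiff : Differentiable ℝ T := fun x ↦ (hT' x).differentiableAt
  have hderiv (x : ℝ) : c ≤ deriv T x := (hT' x).deriv ▸ hcf x
  have hmono : StrictMono T := strictMono_of_deriv_pos fun x ↦ hc.trans_le (hderiv x)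
  have hgrow := mul_sub_le_image_sub_of_le_deriv hdiff hderiv
  have htop : Tendsto T atTop atTop := by
    refine tendsto_atTop_mono' _ ?_ (tendsto_id.const_mul_atTop hc)
    filter_upwards [eventually_ge_atTop 0] with x hx
    simpa [hT0] using hgrow hx
  have hbot : Tendsto T atBot atBot := by
    refine tendsto_atBot_mono' _ ?_ (tendsto_id.const_mul_atBot hc)
    filter_upwards [eventually_le_atBot 0] with x hx
    simpa [hT0] using hgrow hx
  let e : ℝ ≃o ℝ := hmono.orderIsoOfSurjective T (hdiff.continuous.surjective htop hbot)
  have he (t : ℝ) : T (e.symm t) = t := e.apply_symm_apply t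
  refine ⟨e.symm, hmono.injective (by rw [he, hT0]), fun t ↦ ?_⟩
  exact HasDerivAt.of_local_left_inverse e.symm.continuous.continuousAt (hT' _)
    (hc.trans_le (hcf _)).ne' (Eventually.of_forall he)

/-- A solution of an autonomous equation with a smooth right-hand side is smooth. -/
theorem contDiff_infty_of_hasDerivAt_comp {g u : ℝ → ℝ} (hg : ContDiff ℝ (⊤ : ℕ∞) g)
    (hu : ∀ t, HasDerivAt u (g (u t)) t) : ContDiff ℝ (⊤ : ℕ∞) u := by
  have hderiv : deriv u = g ∘ u := funext fun t ↦ (hu t).deriv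
  refine contDiff_infty.2 fun n ↦ ?_
  induction n with
  | zero => exact contDiff_zero.2 (continuous_iff_continuousAt.2 fun t ↦ (hu t).continuousAt)
  | succ n ih =>
    push_cast
    refine contDiff_succ_iff_deriv.2 ⟨fun t ↦ (hu t).differentiableAt, by simp, ?_⟩
    rw [hderiv]
    exact (contDiff_infty.1 hg n).comp ih

/-- Conservation of energy for the scaling ODE. -/
theorem scaling_ode_rpow_neg_eq {α : ℝ} {τ w : ℝ → ℝ} (hpos : ∀ t, 0 < τ t) (h0 : τ 0 = 1)
    (hw0 : w 0 = 0) (hτ : ∀ t, HasDerivAt τ (w t) t)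
    (hw : ∀ t, HasDerivAt w (α / (2 * τ t ^ (1 + α))) t) (t : ℝ) :
    τ t ^ (-α) = 1 - w t ^ 2 := by
  have hE (s : ℝ) : HasDerivAt (fun t ↦ w t ^ 2 + τ t ^ (-α)) 0 s := by
    refine HasDerivAt.congr_deriv
      (((hw s).pow 2).add ((hτ s).rpow_const (p := -α) (Or.inl (hpos s).ne'))) ?_
    rw [show -α - 1 = -(1 + α) by ring, Real.rpow_neg (hpos s).le]
    have := (Real.rpow_pos_of_pos (hpos s) (1 + α)).ne'
    field_simp
    ring
  have h := is_const_of_deriv_eq_zero (fun s ↦ (hE s).differentiableAt)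
    (fun s ↦ (hE s).deriv) t 0
  simp only [h0, hw0, Real.one_rpow] at h
  linarith

/-- The solution of the scaling ODE is determined by its initial data, because its derivative `w`
solves `w' = (α / 2) (1 - w ^ 2) ^ (1 + 1 / α)` and stays in `[-1, 1]`. -/
theorem scaling_ode_unique {α : ℝ} (hα : 0 < α) {τ₁ τ₂ w₁ w₂ : ℝ → ℝ}
    (hpos₁ : ∀ t, 0 < τ₁ t) (h0₁ : τ₁ 0 = 1) (hw0₁ : w₁ 0 = 0)
    (hτ₁ : ∀ t, HasDerivAt τ₁ (w₁ t) t)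
    (hw₁ : ∀ t, HasDerivAt w₁ (α / (2 * τ₁ t ^ (1 + α))) t)
    (hpos₂ : ∀ t, 0 < τ₂ t) (h0₂ : τ₂ 0 = 1) (hw0₂ : w₂ 0 = 0)
    (hτ₂ : ∀ t, HasDerivAt τ₂ (w₂ t) t)
    (hw₂ : ∀ t, HasDerivAt w₂ (α / (2 * τ₂ t ^ (1 + α))) t) : τ₁ = τ₂ := by
  let v : ℝ → ℝ := fun x ↦ α / 2 * (1 - x ^ 2) ^ (1 + 1 / α)
  have hv : ContDiff ℝ 1 v := by
    have hp : ContDiff ℝ (1 : ℕ) fun x : ℝ ↦ x ^ (1 + 1 / α) :=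
      Real.contDiff_rpow_const_of_le (by
        have : 0 < 1 / α := by positivity
        push_cast
        linarith)
    exact contDiff_const.mul (hp.comp (contDiff_const.sub (contDiff_id.pow 2)))
  obtain ⟨K, hK⟩ := hv.contDiffOn.exists_lipschitzOnWith one_ne_zero
    (convex_Icc (-1 : ℝ) 1) isCompact_Icc
  have key {τ w : ℝ → ℝ} (hpos : ∀ t, 0 < τ t) (h0 : τ 0 = 1) (hw0 : w 0 = 0)
      (hτ : ∀ t, HasDerivAt τ (w t) t)
      (hw : ∀ t, HasDerivAt w (α / (2 * τ t ^ (1 + α))) t) (t : ℝ) :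
      HasDerivAt w (v (w t)) t ∧ w t ∈ Icc (-1 : ℝ) 1 := by
    have hE := scaling_ode_rpow_neg_eq hpos h0 hw0 hτ hw t
    have hEpos := Real.rpow_pos_of_pos (hpos t) (-α)
    refine ⟨?_, abs_le.1 ((sq_le_one_iff_abs_le_one _).1 (by linarith))⟩
    refine HasDerivAt.congr_deriv (hw t) ?_
    simp only [v]
    rw [← hE, ← Real.rpow_mul (hpos t).le,
      show -α * (1 + 1 / α) = -(1 + α) by field_simp; ring, Real.rpow_neg (hpos t).le]
    have := (Real.rpow_pos_of_pos (hpos t) (1 + α)).ne'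
    field_simp
  have hw : w₁ = w₂ :=
    ODE_solution_unique_univ (v := fun _ ↦ v) (s := fun _ ↦ Icc (-1) 1) (t₀ := 0) (fun _ ↦ hK)
      (key hpos₁ h0₁ hw0₁ hτ₁ hw₁) (key hpos₂ h0₂ hw0₂ hτ₂ hw₂) (hw0₁.trans hw0₂.symm)
  funext t
  refine (Real.rpow_left_inj (hpos₁ t).le (hpos₂ t).le (neg_ne_zero.2 hα.ne')).1 ?_
  rw [scaling_ode_rpow_neg_eq hpos₁ h0₁ hw0₁ hτ₁ hw₁,
    scaling_ode_rpow_neg_eq hpos₂ h0₂ hw0₂ hτ₂ hw₂, hw]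

/-- Global existence for the scaling ODE: `τ = cosh(u) ^ (2 / α)` and `τ' = tanh(u)`, where
`u' = (α / 2) cosh(u) ^ (-2 / α)`. -/
theorem scaling_ode_exists {α : ℝ} (hα : 0 < α) :
    ∃ τ w : ℝ → ℝ, ContDiff ℝ (⊤ : ℕ∞) τ ∧ (∀ t, 0 < τ t) ∧ τ 0 = 1 ∧ w 0 = 0 ∧
      (∀ t, HasDerivAt τ (w t) t) ∧ ∀ t, HasDerivAt w (α / (2 * τ t ^ (1 + α))) t := by
  have hne (x : ℝ) : Real.cosh x ≠ 0 := (Real.cosh_pos x).ne'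
  have hpow : ContDiff ℝ (⊤ : ℕ∞) fun x ↦ Real.cosh x ^ (2 / α) :=
    Real.contDiff_cosh.rpow_const_of_ne hne
  have hpow_pos (x : ℝ) : 0 < Real.cosh x ^ (2 / α) := Real.rpow_pos_of_pos (Real.cosh_pos x) _
  obtain ⟨u, hu0, hu⟩ := exists_forall_hasDerivAt_inv_comp
    (f := fun x ↦ 2 / α * Real.cosh x ^ (2 / α)) (c := 2 / α)
    (continuous_const.mul hpow.continuous) (by positivity)
    (fun x ↦ le_mul_of_one_le_right (by positivity)
      (Real.one_le_rpow (Real.one_le_cosh x) (by positivity)))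
  have hu_smooth : ContDiff ℝ (⊤ : ℕ∞) u := contDiff_infty_of_hasDerivAt_comp
    ((contDiff_const.mul hpow).inv fun x ↦ (mul_pos (by positivity) (hpow_pos x)).ne') hu
  refine ⟨fun t ↦ Real.cosh (u t) ^ (2 / α), fun t ↦ Real.sinh (u t) / Real.cosh (u t),
    hpow.comp hu_smooth, fun t ↦ hpow_pos _, by simp [hu0], by simp [hu0], fun t ↦ ?_,
    fun t ↦ ?_⟩
  · refine HasDerivAt.congr_deriv ((hu t).cosh.rpow_const (p := 2 / α) (Or.inl (hne _))) ?_
    rw [Real.rpow_sub_one (hne _)]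
    have := (hpow_pos (u t)).ne'
    have := hne (u t)
    field_simp
  · refine HasDerivAt.congr_deriv ((hu t).sinh.div (hu t).cosh (hne _)) ?_
    rw [← Real.rpow_mul (Real.cosh_pos _).le,
      show 2 / α * (1 + α) = 2 / α + 2 by field_simp,
      Real.rpow_add (Real.cosh_pos _), Real.rpow_two]
    have := (hpow_pos (u t)).ne'
    have := hne (u t)
    field_simp
    linear_combination Real.cosh_sq (u t)

/-- Global existence and uniqueness for the scaling ODE
`τ'' = α / (2 τ^{1+α})`, `τ(0) = 1`, `τ'(0) = 0`, with `τ > 0` everywhere. -/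
theorem scaling_ode_exists_unique (α : ℝ) (hα : 0 < α) :
    ∃! τ : ℝ → ℝ, ContDiff ℝ (⊤ : ℕ∞) τ ∧ (∀ t, 0 < τ t) ∧ τ 0 = 1 ∧ deriv τ 0 = 0 ∧
      ∀ t, deriv (deriv τ) t = α / (2 * τ t ^ (1 + α)) := by
  obtain ⟨τ, w, hsmooth, hpos, h0, hw0, hτ, hw⟩ := scaling_ode_exists hα
  have hderiv : deriv τ = w := funext fun t ↦ (hτ t).deriv
  refine ⟨τ, ⟨hsmooth, hpos, h0, by rw [hderiv, hw0], fun t ↦ by rw [hderiv, (hw t).deriv]⟩, ?_⟩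
  rintro σ ⟨hσ_smooth, hσ_pos, hσ0, hσ0', hσ⟩
  have hσ_deriv : ContDiff ℝ (⊤ : ℕ∞) (deriv σ) := (contDiff_infty_iff_deriv.1 hσ_smooth).2
  exact scaling_ode_unique hα hσ_pos hσ0 hσ0'
    (fun t ↦ (hσ_smooth.differentiable (by simp) t).hasDerivAt)
    (fun t ↦ hσ t ▸ (hσ_deriv.differentiable (by simp) t).hasDerivAt) hpos h0 hw0 hτ hw
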